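/- arXiv:math/9802117 — 3 statements merged into one kernel-verified Lean document; each statement's English description precedes it below -/
import Mathlib

section
/- Suppose there exists L > 0 such that the map l ↦ A(l) restricted to [0, L] is a continuous, strictly increasing bijection from [0, L] onto [0, 1], with inverse function A⁻¹ : [0, 1] → [0, L]. Then for every real α > 0, the α-th moment of the k-th nearest-neighbor distance satisfies E[D_k(N)^α] = (N! / ((N−k)!·(k−1)!)) · ∫₀¹ (A⁻¹(w))^α · w^{k−1} · (1 − w)^{N−k} dw. -/
open MeasureTheory Metric Filter
open scoped ENNReal Topology

/-- The `k`-th smallest value (1-indexed) among the `N` real numbers `f 0, …, f (N-1)`. -/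
noncomputable def kthVal {N : ℕ} (k : ℕ) (f : Fin N → ℝ) : ℝ :=
  (((Finset.univ : Finset (Fin N)).val.map f).sort (· ≤ ·)).getD (k - 1) 0

/-!
The `k`-th smallest distance is at most `t` iff at least `k` of the `N` sites lie in
`closedBall x t`. The number of such sites is binomial with parameters `N` and `p = A t`, and the
derivative in `p` of the tail `P(Bin(N, p) ≥ k)` telescopes to the density of the beta
distribution with parameters `k` and `N - k + 1`. Since `Ainv w ≤ t ↔ w ≤ A t`, the `k`-th
distance has the law of `Ainv W` with `W` beta distributed.
-/

section

open ProbabilityTheory Set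
open scoped Nat Polynomial unitInterval

section KthValue

variable {N k : ℕ}

theorem kthVal_succ_eq_comp_sort (hkN : k < N) (f : Fin N → ℝ) :
    kthVal (k + 1) f = (f ∘ Tuple.sort f) ⟨k, hkN⟩ := by
  have hsort : (Finset.univ.val.map f).sort (· ≤ ·) = List.ofFn (f ∘ Tuple.sort f) := by
    refine List.Perm.eq_of_sortedLE (Multiset.pairwise_sort _ _).sortedLE
      (Tuple.monotone_sort f).sortedLE_ofFn ?_
    rw [← Multiset.coe_eq_coe, Multiset.sort_eq, Fin.univ_val_map]
    exact Multiset.coe_eq_coe.2 (Equiv.Perm.ofFn_comp_perm _ f).symm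
  rw [kthVal, hsort, Nat.add_sub_cancel, List.getD_eq_getElem _ _ (by simpa using hkN),
    List.getElem_ofFn]

theorem kthVal_succ_le_iff (hkN : k < N) (f : Fin N → ℝ) (t : ℝ) :
    kthVal (k + 1) f ≤ t ↔ k + 1 ≤ {i | f i ≤ t}.ncard := by
  have hcard : {i | (f ∘ Tuple.sort f) i ≤ t}.ncard = {i | f i ≤ t}.ncard :=
    ncard_preimage_of_injective_subset_range (s := {i | f i ≤ t}) (Tuple.sort f).injective
      (by simp)
  rw [kthVal_succ_eq_comp_sort hkN,
    ← Tuple.lt_card_le_iff_apply_le_of_monotone (Tuple.monotone_sort f), ← hcard,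
    ncard_eq_toFinset_card', toFinset_ofPred, Nat.succ_le_iff]

end KthValue

section Hits

variable {ι M : Type*} [MeasurableSpace M] {B : Set M}

theorem measurable_setOf_mem_pi (hB : MeasurableSet B) :
    Measurable fun ω : ι → M => {i | ω i ∈ B} :=
  measurable_set_iff.2 fun i => measurable_mem.2 hB |>.comp (measurable_pi_apply i)

theorem map_mem_eq_bernoulliMeasure (μ : Measure M) [IsProbabilityMeasure μ]
    (hB : MeasurableSet B) {p : I} (hp : μ.real B = p) :
    μ.map (· ∈ B) = bernoulliMeasure True False p := by
  have hmem : Measurable (· ∈ B) := measurable_mem.2 hB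
  have := Measure.isProbabilityMeasure_map hmem.aemeasurable (μ := μ)
  refine Measure.ext_of_measureReal_singleton fun q => ?_
  rw [map_measureReal_apply hmem (measurableSet_singleton q)]
  obtain rfl | rfl := Classical.propComplete q
  · have hpre : (· ∈ B) ⁻¹' {True} = B := by ext; simp
    rw [hpre, bernoulliMeasure_real_apply_of_mem_of_notMem _ (measurableSet_singleton _) (by simp)
      (by simp), hp]
  · have hpre : (· ∈ B) ⁻¹' {False} = Bᶜ := by ext; simp
    rw [hpre, bernoulliMeasure_real_apply_of_notMem_of_mem _ (measurableSet_singleton _) (by simp)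
      (by simp),
      probReal_compl_eq_one_sub hB, hp]

variable [Fintype ι]

theorem map_setOf_mem_pi (μ : Measure M) [IsProbabilityMeasure μ] (hB : MeasurableSet B) {p : I}
    (hp : μ.real B = p) :
    (Measure.pi fun _ : ι => μ).map (fun ω => {i | ω i ∈ B}) = setBernoulli univ p := by
  have hmem : Measurable (· ∈ B) := measurable_mem.2 hB
  have := Measure.isProbabilityMeasure_map hmem.aemeasurable (μ := μ)
  have hpi : (Measure.pi fun _ : ι => μ).map (fun ω i => ω i ∈ B)
      = Measure.pi fun _ => bernoulliMeasure True False p := by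
    rw [Measure.pi_map_pi fun _ => hmem.aemeasurable, map_mem_eq_bernoulliMeasure μ hB hp]
  simp only [setBernoulli_eq_map, mem_univ, Measure.infinitePi_eq_pi]
  change _ = (Measure.pi fun _ : ι => bernoulliMeasure True False p).map _
  rw [← hpi, Measure.map_map measurable_setOfPred (by fun_prop)]
  rfl

theorem map_ncard_setOf_mem_pi (μ : Measure M) [IsProbabilityMeasure μ] (hB : MeasurableSet B)
    {p : I} (hp : μ.real B = p) :
    (Measure.pi fun _ : ι => μ).map (fun ω => {i | ω i ∈ B}.ncard)
      = binomial (Fintype.card ι) p := by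
  have hmap : (Measure.pi fun _ : ι => μ).map (fun ω => {i | ω i ∈ B}.ncard)
      = (setBernoulli (univ : Set ι) p).map ncard := by
    rw [← map_setOf_mem_pi μ hB hp,
      Measure.map_map measurable_ncard (measurable_setOf_mem_pi hB)]
    rfl
  refine Measure.ext_of_singleton fun j => ?_
  rw [hmap, map_ncard_setBernoulli_singleton finite_univ, binomial_singleton, ncard_univ,
    Nat.card_eq_fintype_card]

end Hits

section BinomialTail

theorem derivative_sum_range_succ_bernsteinPolynomial (R : Type*) [CommRing R] (n k : ℕ) :
    (∑ j ∈ Finset.range (k + 1), bernsteinPolynomial R n j).derivative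
      = -n * bernsteinPolynomial R (n - 1) k := by
  induction k with
  | zero => simp [bernsteinPolynomial.derivative_zero]
  | succ k ih =>
    rw [Finset.sum_range_succ, Polynomial.derivative_add, ih, bernsteinPolynomial.derivative_succ]
    ring

theorem binomial_real_Ici_succ (n k : ℕ) (p : I) :
    (binomial n p).real (Ici (k + 1))
      = ∫ w in (0 : ℝ)..p, n * (bernsteinPolynomial ℝ (n - 1) k).eval w := by
  set S : ℝ[X] := ∑ j ∈ Finset.range (k + 1), bernsteinPolynomial ℝ n j with hS
  have hderiv (w : ℝ) :
      HasDerivAt (fun w => -S.eval w) (n * (bernsteinPolynomial ℝ (n - 1) k).eval w) w := by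
    refine (S.hasDerivAt w).neg.congr_deriv ?_
    rw [derivative_sum_range_succ_bernsteinPolynomial]
    simp
  have hS_zero : S.eval 0 = 1 := by
    simp [hS, Polynomial.eval_finsetSum, bernsteinPolynomial.eval_at_0]
  have hS_eval : (binomial n p).real (Iio (k + 1)) = S.eval (p : ℝ) := by
    rw [← Finset.coe_range, ← sum_measureReal_singleton, hS, Polynomial.eval_finsetSum]
    simp [binomial_real_singleton, bernsteinPolynomial]
  rw [intervalIntegral.integral_eq_sub_of_hasDerivAt (fun w _ => hderiv w)
    (Continuous.intervalIntegrable (by fun_prop) _ _), hS_zero, ← hS_eval, ← compl_Iio,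
    probReal_compl_eq_one_sub measurableSet_Iio]
  ring

end BinomialTail

section Beta

theorem betaMeasure_eq_withDensity_restrict_Ioo (α β : ℝ) :
    betaMeasure α β = (volume.restrict (Ioo 0 1)).withDensity (betaPDF α β) := by
  rw [betaMeasure, ← withDensity_indicator measurableSet_Ioo]
  congr 1
  refine (indicator_eq_self.2 fun w (hw : betaPDF α β w ≠ 0) => mem_Ioo.2
    ⟨not_le.1 fun h => hw (betaPDF_eq_zero_of_nonpos h),
      not_le.1 fun h => hw (betaPDF_eq_zero_of_one_le h)⟩).symm

theorem betaMeasure_absolutelyContinuous_restrict_Ioo (α β : ℝ) :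
    betaMeasure α β ≪ volume.restrict (Ioo 0 1) :=
  betaMeasure_eq_withDensity_restrict_Ioo α β ▸ withDensity_absolutelyContinuous _ _

theorem one_div_beta_natCast_add_one (k m : ℕ) :
    1 / beta (k + 1) (m + 1) = ((k + m + 1)! : ℝ) / (m ! * k !) := by
  rw [beta, show (k + 1 + (m + 1) : ℝ) = (k + m + 1 : ℕ) + 1 by push_cast; ring]
  simp only [Real.Gamma_nat_eq_factorial, one_div_div, mul_comm]

theorem integral_betaMeasure_natCast_add_one {E : Type*} [NormedAddCommGroup E] [NormedSpace ℝ E]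
    (k m : ℕ) (f : ℝ → E) :
    ∫ w, f w ∂betaMeasure (k + 1) (m + 1)
      = (((k + m + 1)! : ℝ) / (m ! * k !)) •
        ∫ w in (0 : ℝ)..1, (w ^ k * (1 - w) ^ m) • f w := by
  rw [betaMeasure_eq_withDensity_restrict_Ioo, integral_withDensity_eq_integral_toReal_smul
      (f := betaPDF _ _) (measurable_betaPDFReal _ _).ennreal_ofReal (by simp [betaPDF]),
    intervalIntegral.integral_of_le zero_le_one, integral_Ioc_eq_integral_Ioo, ← integral_smul]
  refine setIntegral_congr_fun measurableSet_Ioo fun w hw => ?_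
  have hpdf : betaPDFReal (k + 1) (m + 1) w
      = ((k + m + 1)! : ℝ) / (m ! * k !) * (w ^ k * (1 - w) ^ m) := by
    rw [betaPDFReal, if_pos (mem_Ioo.1 hw), one_div_beta_natCast_add_one]
    simp [mul_assoc]
  have hpos : 0 ≤ betaPDFReal (k + 1) (m + 1) w :=
    (betaPDFReal_pos hw.1 hw.2 (by positivity) (by positivity)).le
  rw [betaPDF, ENNReal.toReal_ofReal hpos, hpdf, mul_smul]

theorem betaMeasure_real_Iic_eq_binomial_real_Ici (k m : ℕ) (p : I) :
    (betaMeasure (k + 1) (m + 1)).real (Iic (p : ℝ))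
      = (binomial (k + m + 1) p).real (Ici (k + 1)) := by
  have hdensity (w : ℝ) :
      ((k + m + 1 : ℕ) : ℝ) * (bernsteinPolynomial ℝ (k + m) k).eval w
        = ((k + m + 1)! : ℝ) / (m ! * k !) * (w ^ k * (1 - w) ^ m) := by
    simp only [bernsteinPolynomial, Polynomial.eval_mul, Polynomial.eval_pow, Polynomial.eval_sub,
      Polynomial.eval_X, Polynomial.eval_one, Polynomial.eval_natCast, Nat.cast_add_choose,
      Nat.add_sub_cancel_left, Nat.factorial_succ]
    push_cast
    ring
  have hindicator : (fun w : ℝ => (w ^ k * (1 - w) ^ m) • (Iic (p : ℝ)).indicator 1 w)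
      = {w | w ≤ (p : ℝ)}.indicator fun w => w ^ k * (1 - w) ^ m := by
    funext w
    simp [indicator_apply]
  rw [← integral_indicator_one measurableSet_Iic, integral_betaMeasure_natCast_add_one,
    hindicator, binomial_real_Ici_succ, Nat.add_sub_cancel]
  simp only [hdensity, intervalIntegral.integral_const_mul,
    intervalIntegral.integral_indicator p.2, smul_eq_mul]

end Beta

section Quantile

/-- `Q` is a quantile function (generalized inverse of the distribution function) of the
probability measure `ν` on `ℝ`, expressed as a Galois connection with `cdf ν`. Levels outside the
open interval `(0, 1)` are unconstrained. -/
def IsQuantileFunction (Q : ℝ → ℝ) (ν : Measure ℝ) : Prop :=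
  ∀ w ∈ Ioo (0 : ℝ) 1, ∀ t, Q w ≤ t ↔ w ≤ cdf ν t

variable {Q : ℝ → ℝ} {ν : Measure ℝ}

theorem IsQuantileFunction.of_leftInvOn {a b : ℝ} (hlow : ∀ t < a, cdf ν t = 0)
    (hleft : LeftInvOn Q (cdf ν) (Icc a b)) (hsurj : SurjOn (cdf ν) (Icc a b) (Ioo 0 1)) :
    IsQuantileFunction Q ν := by
  intro w hw t
  obtain ⟨l, hl, rfl⟩ := hsurj hw
  rw [hleft hl]
  refine ⟨fun hlt => monotone_cdf ν hlt, fun hle => ?_⟩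
  by_contra! htl
  have hat : a ≤ t := by
    by_contra! hta
    exact hw.1.not_ge (hlow t hta ▸ hle)
  have heq : cdf ν t = cdf ν l := (monotone_cdf ν htl.le).antisymm hle
  exact htl.ne (hleft.injOn ⟨hat, htl.le.trans hl.2⟩ hl heq)

theorem IsQuantileFunction.monotoneOn (hQ : IsQuantileFunction Q ν) : MonotoneOn Q (Ioo 0 1) :=
  fun v hv w hw hvw => (hQ v hv _).2 (hvw.trans ((hQ w hw _).1 le_rfl))

theorem IsQuantileFunction.aemeasurable_betaMeasure (hQ : IsQuantileFunction Q ν) (α β : ℝ) :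
    AEMeasurable Q (betaMeasure α β) :=
  (aemeasurable_restrict_of_monotoneOn measurableSet_Ioo hQ.monotoneOn).mono_ac
    (betaMeasure_absolutelyContinuous_restrict_Ioo α β)

theorem IsQuantileFunction.map_betaMeasure_Iic (hQ : IsQuantileFunction Q ν) (α β t : ℝ) :
    (betaMeasure α β).map Q (Iic t) = betaMeasure α β (Iic (cdf ν t)) := by
  have hae : Q ⁻¹' Iic t =ᵐ[betaMeasure α β] Iic (cdf ν t) :=
    (betaMeasure_absolutelyContinuous_restrict_Ioo α β).ae_le <|
      ae_restrict_of_forall_mem measurableSet_Ioo fun w hw => propext (hQ w hw t)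
  rw [Measure.map_apply_of_aemeasurable (hQ.aemeasurable_betaMeasure α β) measurableSet_Iic,
    measure_congr hae]

theorem isQuantileFunction_map_dist {M : Type*} [PseudoMetricSpace M] [MeasurableSpace M]
    [OpensMeasurableSpace M] {μ : Measure M} [IsProbabilityMeasure μ] {x : M} {L : ℝ}
    (hleft : LeftInvOn Q (fun l => μ.real (closedBall x l)) (Icc 0 L))
    (hsurj : SurjOn (fun l => μ.real (closedBall x l)) (Icc 0 L) (Ioo 0 1)) :
    IsQuantileFunction Q (μ.map (dist x)) := by
  have hdist : Measurable (dist x) := (continuous_const.dist continuous_id).measurable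
  have := Measure.isProbabilityMeasure_map hdist.aemeasurable (μ := μ)
  have hcdf : ⇑(cdf (μ.map (dist x))) = fun l => μ.real (closedBall x l) := by
    funext l
    rw [cdf_eq_real, map_measureReal_apply hdist measurableSet_Iic]
    congr 1 with y
    exact mem_closedBall'.symm
  refine .of_leftInvOn (fun t ht => ?_) (hcdf ▸ hleft) (hcdf ▸ hsurj)
  simp only [hcdf, closedBall_eq_empty.2 ht, measureReal_empty]

end Quantile

section OrderStatistic

theorem measurable_kthVal_succ {N k : ℕ} (hkN : k < N) :
    Measurable (kthVal (N := N) (k + 1)) := by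
  refine measurable_of_Iic fun t => ?_
  simp only [preimage, mem_Iic, kthVal_succ_le_iff hkN]
  exact (measurable_ncard.comp (measurable_setOf_mem_pi measurableSet_Iic)) measurableSet_Ici

theorem map_kthVal_succ_pi_Iic {N k : ℕ} (hkN : k < N) (ν : Measure ℝ) [IsProbabilityMeasure ν]
    {p : I} {t : ℝ} (hp : cdf ν t = p) :
    (Measure.pi fun _ : Fin N => ν).map (kthVal (k + 1)) (Iic t) = binomial N p (Ici (k + 1)) := by
  rw [cdf_eq_real] at hp
  have hbin := map_ncard_setOf_mem_pi (ι := Fin N) ν measurableSet_Iic hp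
  rw [Fintype.card_fin] at hbin
  rw [Measure.map_apply (measurable_kthVal_succ hkN) measurableSet_Iic, ← hbin,
    Measure.map_apply (measurable_ncard.fun_comp (measurable_setOf_mem_pi measurableSet_Iic))
      measurableSet_Ici]
  congr 1 with f
  exact kthVal_succ_le_iff hkN f t

theorem map_kthVal_succ_pi (k m : ℕ) (ν : Measure ℝ) [IsProbabilityMeasure ν] {Q : ℝ → ℝ}
    (hQ : IsQuantileFunction Q ν) :
    (Measure.pi fun _ : Fin (k + m + 1) => ν).map (kthVal (k + 1))
      = (betaMeasure (k + 1) (m + 1)).map Q := by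
  have := isProbabilityMeasureBeta (α := k + 1) (β := m + 1) (by positivity) (by positivity)
  have hk : k < k + m + 1 := by lia
  have := Measure.isProbabilityMeasure_map (μ := Measure.pi fun _ : Fin (k + m + 1) => ν)
    (measurable_kthVal_succ hk).aemeasurable
  refine Measure.ext_of_Iic _ _ fun t => ?_
  let p : I := ⟨cdf ν t, cdf_nonneg ν t, cdf_le_one ν t⟩
  rw [map_kthVal_succ_pi_Iic hk ν (p := p) rfl, hQ.map_betaMeasure_Iic,
    ← measureReal_eq_measureReal_iff]
  exact (betaMeasure_real_Iic_eq_binomial_real_Ici k m p).symm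

theorem kth_nearest_distance_moment_general {M E : Type*} [MeasurableSpace M]
    [NormedAddCommGroup E] [NormedSpace ℝ E] (μ : Measure M) [IsProbabilityMeasure μ]
    {X : M → ℝ} (hX : Measurable X) {Q : ℝ → ℝ} (hQ : IsQuantileFunction Q (μ.map X)) {N k : ℕ}
    (hk : 1 ≤ k) (hkN : k ≤ N) {g : ℝ → E} (hg : StronglyMeasurable g) :
    ∫ ω : Fin N → M, g (kthVal k fun i => X (ω i)) ∂(Measure.pi fun _ : Fin N => μ)
      = ((N ! : ℝ) / ((N - k)! * (k - 1)!)) •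
        ∫ w in (0 : ℝ)..1, (w ^ (k - 1) * (1 - w) ^ (N - k)) • g (Q w) := by
  obtain ⟨k, rfl⟩ := Nat.exists_eq_add_of_le' hk
  obtain ⟨m, rfl⟩ : ∃ m, N = k + m + 1 := ⟨N - (k + 1), by lia⟩
  have := Measure.isProbabilityMeasure_map hX.aemeasurable (μ := μ)
  have hkth := measurable_kthVal_succ (show k < k + m + 1 by lia)
  have hXpi : Measurable fun (ω : Fin (k + m + 1) → M) i => X (ω i) :=
    measurable_pi_lambda _ fun i => hX.comp (measurable_pi_apply i)
  have hpi : (Measure.pi fun _ : Fin (k + m + 1) => μ).map (fun ω i => X (ω i))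
      = Measure.pi fun _ => μ.map X :=
    Measure.pi_map_pi fun _ => hX.aemeasurable
  calc ∫ ω : Fin (k + m + 1) → M, g (kthVal (k + 1) fun i => X (ω i)) ∂(Measure.pi fun _ => μ)
      = ∫ f, g (kthVal (k + 1) f) ∂(Measure.pi fun _ : Fin (k + m + 1) => μ.map X) := by
        rw [← hpi]
        exact (integral_map hXpi.aemeasurable
          (hg.comp_measurable hkth).aestronglyMeasurable).symm
    _ = ∫ y, g y ∂(betaMeasure (k + 1) (m + 1)).map Q := by
        rw [← map_kthVal_succ_pi k m _ hQ,
          integral_map hkth.aemeasurable hg.aestronglyMeasurable]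
    _ = ∫ w, g (Q w) ∂betaMeasure (k + 1) (m + 1) :=
        integral_map (hQ.aemeasurable_betaMeasure _ _) hg.aestronglyMeasurable
    _ = _ := by
        rw [integral_betaMeasure_natCast_add_one, Nat.add_sub_cancel,
          show k + m + 1 - (k + 1) = m by lia]

end OrderStatistic

end

/-- Let `M` be a separable metric space with a Borel probability measure `μ`,
`x ∈ M`, `1 ≤ k ≤ N`, and let `D_k(N)` be the `k`-th smallest of the distances from `x` to `N`
i.i.d. sites with distribution `μ` (modelled by the product measure on `Fin N → M`).  Suppose
`A(l) = μ(closedBall x l)` restricted to `[0, L]` (some `L > 0`) is a continuous strictly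
increasing bijection onto `[0, 1]` with inverse `Ainv`.  Then
for every real `α > 0`,
`E[D_k(N)^α] = (N! / ((N−k)!(k−1)!)) ∫₀¹ Ainv(w)^α w^(k−1) (1−w)^(N−k) dw`. -/
theorem kth_nearest_distance_moment
    {M : Type*} [MetricSpace M] [TopologicalSpace.SeparableSpace M]
    [MeasurableSpace M] [BorelSpace M]
    (μ : Measure M) [IsProbabilityMeasure μ]
    (x : M) (N k : ℕ) (hN : 1 ≤ N) (hk : 1 ≤ k) (hkN : k ≤ N)
    (L : ℝ) (hL : 0 < L) (Ainv : ℝ → ℝ)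
    (hcont : ContinuousOn (fun l => (μ (closedBall x l)).toReal) (Set.Icc 0 L))
    (hmono : StrictMonoOn (fun l => (μ (closedBall x l)).toReal) (Set.Icc 0 L))
    (hbij : Set.BijOn (fun l => (μ (closedBall x l)).toReal) (Set.Icc 0 L) (Set.Icc 0 1))
    (hinv : Set.InvOn Ainv (fun l => (μ (closedBall x l)).toReal) (Set.Icc 0 L) (Set.Icc 0 1))
    (α : ℝ) (hα : 0 < α) :
    ∫ ω : Fin N → M, (kthVal k (fun i => dist x (ω i))) ^ α
        ∂(Measure.pi fun _ : Fin N => μ) =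
      (N.factorial : ℝ) / ((N - k).factorial * (k - 1).factorial) *
        ∫ w in (0:ℝ)..1, (Ainv w) ^ α * w ^ (k - 1) * (1 - w) ^ (N - k) := by
  have hQ : IsQuantileFunction Ainv (μ.map (dist x)) :=
    isQuantileFunction_map_dist hinv.1 (hbij.surjOn.mono subset_rfl Set.Ioo_subset_Icc_self)
  have hdist : Measurable (dist x) := (continuous_const.dist continuous_id).measurable
  have hpow : StronglyMeasurable fun y : ℝ => y ^ α :=
    (measurable_id.pow_const α).stronglyMeasurable
  simpa only [smul_eq_mul, mul_comm, mul_left_comm, mul_assoc] using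
    kth_nearest_distance_moment_general μ hdist hQ hk hkN hpow
end

section
/- Let d ≥ 1 be an integer. Suppose M has finite diameter and there exists l₀ > 0 with w₀ := π^{d/2}·l₀^d/Γ(d/2 + 1) ≤ 1 such that A(l) = π^{d/2}·l^d/Γ(d/2 + 1) (the volume of a Euclidean d-ball of radius l) for all 0 ≤ l ≤ l₀. Then for each fixed k ≥ 1 and each ρ with 1 − w₀ < ρ < 1, there exists a constant C > 0 such that for all N ≥ k: |E[D_k(N)] − (Γ(d/2 + 1)^{1/d}/√π) · (Γ(k + 1/d)/Γ(k)) · (Γ(N + 1)/Γ(N + 1 + 1/d))| ≤ C·ρ^N. -/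
/-!
The `k`-th nearest distance exceeds `t` exactly when fewer than `k` of the `N` samples fall in the
ball of radius `t`, an event whose probability is the binomial lower tail `B (A t)`. Hence
`E[D_k(N)] = ∫₀^∞ B (A t) dt`. Let `L` be the radius of the Euclidean ball of volume one. Then
`A t = (t / L) ^ n` for `t ≤ l₀`, while the integral of `B ((t / L) ^ n)` over all of `[0, L]` is a
sum of Beta integrals, which telescopes to the quotient of Gamma functions. The two integrals differ
only beyond `l₀`, where every sample is in the ball with probability at least `w₀`. There a Chernoff
bound makes `B` at most a constant multiple of `ρ ^ N`, and an additional factor `1 - A t`, gained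
from one failed trial, is what makes the bound integrable at infinity when distances have a finite
first moment.
-/

open MeasureTheory Metric Filter
open scoped ENNReal Topology

section OrderStatistic

variable {N k : ℕ}

lemma kthVal_eq_comp_sort (j : Fin N) (f : Fin N → ℝ) :
    kthVal (j + 1) f = f (Tuple.sort f j) := by
  have hsort : (Finset.univ.val.map f).sort (· ≤ ·) = List.ofFn (f ∘ Tuple.sort f) := by
    refine List.Perm.eq_of_pairwise' (Multiset.pairwise_sort _ _)
      (Tuple.monotone_sort f).sortedLE_ofFn.pairwise ?_
    rw [← Multiset.coe_eq_coe, Multiset.sort_eq, Fin.univ_val_map]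
    exact Multiset.coe_eq_coe.2 ((Tuple.sort f).ofFn_comp_perm f).symm
  rw [kthVal, hsort]
  simp

lemma exists_kthVal_eq (hk : 1 ≤ k) (hkN : k ≤ N) (f : Fin N → ℝ) : ∃ i, kthVal k f = f i := by
  obtain ⟨j, rfl⟩ := Nat.exists_eq_add_of_le' hk
  exact ⟨_, kthVal_eq_comp_sort ⟨j, hkN⟩ f⟩

variable {f : Fin N → ℝ}

lemma kthVal_le_iff (hk : 1 ≤ k) (hkN : k ≤ N) {t : ℝ} :
    kthVal k f ≤ t ↔ k ≤ ({i | f i ≤ t} : Finset (Fin N)).card := by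
  obtain ⟨j, rfl⟩ := Nat.exists_eq_add_of_le' hk
  have hcard : ({i | f (Tuple.sort f i) ≤ t} : Finset (Fin N)).card =
      ({i | f i ≤ t} : Finset (Fin N)).card :=
    Finset.card_equiv (Tuple.sort f) (by simp)
  rw [kthVal_eq_comp_sort ⟨j, hkN⟩ f, Nat.succ_le_iff, ← hcard]
  exact (Tuple.lt_card_le_iff_apply_le_of_monotone (Tuple.monotone_sort f)).symm

lemma kthVal_nonneg (hk : 1 ≤ k) (hkN : k ≤ N) (hf : 0 ≤ f) : 0 ≤ kthVal k f := by
  obtain ⟨i, hi⟩ := exists_kthVal_eq hk hkN f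
  exact hi ▸ hf i

lemma kthVal_le_sum (hk : 1 ≤ k) (hkN : k ≤ N) (hf : 0 ≤ f) : kthVal k f ≤ ∑ i, f i := by
  obtain ⟨i, hi⟩ := exists_kthVal_eq hk hkN f
  exact hi ▸ Finset.single_le_sum (fun j _ => hf j) (Finset.mem_univ i)

lemma measurable_kthVal (hk : 1 ≤ k) (hkN : k ≤ N) :
    Measurable (kthVal k : (Fin N → ℝ) → ℝ) := by
  refine measurable_of_Iic fun t => ?_
  simp only [Set.preimage, Set.mem_Iic, kthVal_le_iff hk hkN, Finset.card_filter]
  refine measurableSet_le measurable_const (Finset.measurable_sum _ fun i _ => ?_)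
  exact Measurable.ite (measurableSet_le (measurable_pi_apply i) measurable_const)
    measurable_const measurable_const

end OrderStatistic

section BinomialLowerTail

/-- The probability that a binomial variable with parameters `N` and `p` is less than `k`, as a
polynomial in `p`. -/
noncomputable def binomialLowerTail (N k : ℕ) (p : ℝ) : ℝ :=
  ∑ j ∈ Finset.range k, N.choose j * (p ^ j * (1 - p) ^ (N - j))

variable {N k : ℕ} {p w z : ℝ}

@[fun_prop]
lemma continuous_binomialLowerTail : Continuous (binomialLowerTail N k) := by
  unfold binomialLowerTail
  fun_prop

lemma binomialLowerTail_nonneg (hp₀ : 0 ≤ p) (hp₁ : p ≤ 1) : 0 ≤ binomialLowerTail N k p := by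
  have : 0 ≤ 1 - p := sub_nonneg.2 hp₁
  unfold binomialLowerTail
  positivity

-- Chernoff's method: a lower tail is at most `z ^ (-k)` times the generating function at `z ≤ 1`.
lemma pow_mul_binomialLowerTail_le (hk : k ≤ N + 1) (hp₀ : 0 ≤ p) (hp₁ : p ≤ 1) (hz₀ : 0 ≤ z)
    (hz₁ : z ≤ 1) : z ^ k * binomialLowerTail N k p ≤ (1 - p * (1 - z)) ^ N := by
  have : 0 ≤ 1 - p := sub_nonneg.2 hp₁
  calc z ^ k * binomialLowerTail N k p
      = ∑ j ∈ Finset.range k, z ^ k * (N.choose j * (p ^ j * (1 - p) ^ (N - j))) :=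
        Finset.mul_sum _ _ _
    _ ≤ ∑ j ∈ Finset.range k, z ^ j * (N.choose j * (p ^ j * (1 - p) ^ (N - j))) := by
        refine Finset.sum_le_sum fun j hj => ?_
        gcongr ?_ * _
        exact pow_le_pow_of_le_one hz₀ hz₁ (Finset.mem_range.1 hj).le
    _ ≤ ∑ j ∈ Finset.range (N + 1), z ^ j * (N.choose j * (p ^ j * (1 - p) ^ (N - j))) :=
        Finset.sum_le_sum_of_subset_of_nonneg (Finset.range_mono hk) fun j _ _ => by positivity
    _ = (z * p + (1 - p)) ^ N := by
        rw [add_pow]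
        exact Finset.sum_congr rfl fun j _ => by ring
    _ = (1 - p * (1 - z)) ^ N := by ring

-- If fewer than `k` of `N + 1 ≥ k` trials succeed, then one of the first `k` trials fails and
-- fewer than `k` of the remaining `N` succeed.
lemma binomialLowerTail_succ_le (hk : k ≤ N + 1) (hp₀ : 0 ≤ p) (hp₁ : p ≤ 1) :
    binomialLowerTail (N + 1) k p ≤ k * (1 - p) * binomialLowerTail N k p := by
  have : 0 ≤ 1 - p := sub_nonneg.2 hp₁
  unfold binomialLowerTail
  rw [Finset.mul_sum]
  refine Finset.sum_le_sum fun j hj => ?_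
  have hjk : j < k := Finset.mem_range.1 hj
  have hchoose : (N + 1).choose j ≤ k * N.choose j := by
    obtain ⟨i, hi⟩ := Nat.exists_eq_add_of_le (show j + 1 ≤ k from hjk)
    obtain ⟨m, hm⟩ := Nat.exists_eq_add_of_le hk
    have hfactor : N + 1 ≤ (N + 1 - j) * k := by
      rw [show N + 1 - j = 1 + i + m by omega, hm, hi]
      nlinarith
    refine Nat.le_of_mul_le_mul_right ?_ (show 0 < N + 1 - j by omega)
    rw [← Nat.choose_mul_succ_eq]
    calc N.choose j * (N + 1) ≤ N.choose j * ((N + 1 - j) * k) := by gcongr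
      _ = k * N.choose j * (N + 1 - j) := by ring
  have hchoose' : ((N + 1).choose j : ℝ) ≤ k * N.choose j := mod_cast hchoose
  calc ((N + 1).choose j : ℝ) * (p ^ j * (1 - p) ^ (N + 1 - j))
      ≤ k * N.choose j * (p ^ j * (1 - p) ^ (N + 1 - j)) := by gcongr
    _ = k * (1 - p) * (N.choose j * (p ^ j * (1 - p) ^ (N - j))) := by
        rw [Nat.sub_add_comm (by omega), pow_succ]
        ring

lemma binomialLowerTail_succ_le_mul_one_sub (hk : k ≤ N + 1) (hw : w ≤ p) (hp₀ : 0 ≤ p)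
    (hp₁ : p ≤ 1) (hz₀ : 0 < z) (hz₁ : z ≤ 1) :
    binomialLowerTail (N + 1) k p ≤ k / z ^ k * (1 - w * (1 - z)) ^ N * (1 - p) := by
  have : 0 ≤ 1 - p := sub_nonneg.2 hp₁
  have : 0 ≤ 1 - z := sub_nonneg.2 hz₁
  have htail : binomialLowerTail N k p ≤ (1 - w * (1 - z)) ^ N / z ^ k := by
    rw [le_div_iff₀' (by positivity)]
    refine (pow_mul_binomialLowerTail_le hk hp₀ hp₁ hz₀.le hz₁).trans ?_
    have : 0 ≤ 1 - p * (1 - z) := by nlinarith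
    gcongr
  calc binomialLowerTail (N + 1) k p ≤ k * (1 - p) * binomialLowerTail N k p :=
        binomialLowerTail_succ_le hk hp₀ hp₁
    _ ≤ k * (1 - p) * ((1 - w * (1 - z)) ^ N / z ^ k) := by gcongr
    _ = k / z ^ k * (1 - w * (1 - z)) ^ N * (1 - p) := by ring

end BinomialLowerTail

section BetaIntegral

variable {α L : ℝ}

lemma integral_rpow_pow_mul_one_sub_rpow_pow (hα : 0 < α) (j m : ℕ) :
    ∫ u in (0 : ℝ)..1, (u ^ α) ^ j * (1 - u ^ α) ^ m =
      1 / α * Real.Gamma (j + 1 / α) * m.factorial / Real.Gamma (j + 1 / α + m + 1) := by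
  have hcont : Continuous fun u : ℝ => u ^ α := Real.continuous_rpow_const hα.le
  induction m generalizing j with
  | zero =>
    have hpow : ∫ u in (0 : ℝ)..1, (u ^ α) ^ j = ∫ u in (0 : ℝ)..1, u ^ (α * j) := by
      refine intervalIntegral.integral_congr fun u hu => ?_
      rw [Set.uIcc_of_le zero_le_one] at hu
      exact (Real.rpow_mul_natCast hu.1 α j).symm
    have hx : 0 < j + 1 / α := by positivity
    have hexp : α * j + 1 = α * (j + 1 / α) := by field_simp
    simp only [pow_zero, mul_one, Nat.factorial_zero, Nat.cast_zero, Nat.cast_one, add_zero]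
    rw [hpow, integral_rpow (.inl (by linarith [show 0 ≤ α * j by positivity])),
      Real.Gamma_add_one hx.ne', Real.one_rpow, Real.zero_rpow (by positivity), hexp]
    field_simp
    ring
  | succ m ih =>
    have hsplit : ∀ u : ℝ, (u ^ α) ^ j * (1 - u ^ α) ^ (m + 1) =
        (u ^ α) ^ j * (1 - u ^ α) ^ m - (u ^ α) ^ (j + 1) * (1 - u ^ α) ^ m := fun u => by ring
    simp only [hsplit]
    rw [intervalIntegral.integral_sub (Continuous.intervalIntegrable (by fun_prop) _ _)
      (Continuous.intervalIntegrable (by fun_prop) _ _), ih, ih, Nat.factorial_succ]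
    push_cast
    rw [add_right_comm (j : ℝ) 1 (1 / α)]
    have hx : 0 < j + 1 / α := by positivity
    generalize (j : ℝ) + 1 / α = x at hx ⊢
    have hΓ : Real.Gamma (x + m + 1) ≠ 0 := (Real.Gamma_pos_of_pos (by positivity)).ne'
    have hxm : x + m + 1 ≠ 0 := by positivity
    rw [add_right_comm x 1 (m : ℝ), ← add_assoc x (m : ℝ) 1, Real.Gamma_add_one hx.ne',
      Real.Gamma_add_one hxm]
    field_simp
    ring

lemma sum_range_succ_Gamma_add_div_factorial {a : ℝ} (ha : 0 < a) (k : ℕ) :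
    ∑ j ∈ Finset.range (k + 1), a * Real.Gamma (j + a) / j.factorial =
      Real.Gamma (k + 1 + a) / k.factorial := by
  induction k with
  | zero => simp [add_comm (1 : ℝ), Real.Gamma_add_one ha.ne']
  | succ k ih =>
    rw [Finset.sum_range_succ, ih, Nat.factorial_succ]
    push_cast
    rw [add_right_comm ((k : ℝ) + 1) 1 a, Real.Gamma_add_one (by positivity)]
    field_simp

lemma integral_binomialLowerTail_rpow {N k : ℕ} (hα : 0 < α) (hk : 1 ≤ k) (hkN : k ≤ N) :
    ∫ u in (0 : ℝ)..1, binomialLowerTail N k (u ^ α) =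
      Real.Gamma (k + 1 / α) / Real.Gamma k *
        (Real.Gamma (N + 1) / Real.Gamma (N + 1 + 1 / α)) := by
  have hcont : Continuous fun u : ℝ => u ^ α := Real.continuous_rpow_const hα.le
  obtain ⟨k, rfl⟩ := Nat.exists_eq_add_of_le' hk
  unfold binomialLowerTail
  rw [intervalIntegral.integral_finsetSum
      (fun _ _ => Continuous.intervalIntegrable (by fun_prop) _ _),
    Nat.cast_succ, Real.Gamma_nat_eq_factorial, Real.Gamma_nat_eq_factorial,
    ← sum_range_succ_Gamma_add_div_factorial (by positivity) k, Finset.sum_mul]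
  refine Finset.sum_congr rfl fun j hj => ?_
  have hjN : j ≤ N := by have := Finset.mem_range.1 hj; omega
  have hsum : (j : ℝ) + 1 / α + (N - j : ℕ) + 1 = N + 1 + 1 / α := by
    rw [Nat.cast_sub hjN]
    ring
  rw [intervalIntegral.integral_const_mul, integral_rpow_pow_mul_one_sub_rpow_pow hα, hsum,
    Nat.cast_choose ℝ hjN]
  field_simp

lemma integral_binomialLowerTail_div_rpow {N k : ℕ} (hα : 0 < α) (hL : L ≠ 0) (hk : 1 ≤ k)
    (hkN : k ≤ N) :
    ∫ t in (0 : ℝ)..L, binomialLowerTail N k ((t / L) ^ α) =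
      L * (Real.Gamma (k + 1 / α) / Real.Gamma k) *
        (Real.Gamma (N + 1) / Real.Gamma (N + 1 + 1 / α)) := by
  rw [intervalIntegral.integral_comp_div (fun u => binomialLowerTail N k (u ^ α)) hL, zero_div,
    div_self hL, integral_binomialLowerTail_rpow hα hk hkN, smul_eq_mul, mul_assoc]

end BetaIntegral

section Sampling

lemma setOf_filter_mem_eq_pi {Ω ι : Type*} [Fintype ι] [DecidableEq ι] {B : Set Ω}
    [DecidablePred (· ∈ B)] (S : Finset ι) :
    {ω : ι → Ω | ({i | ω i ∈ B} : Finset ι) = S} =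
      Set.univ.pi fun i => if i ∈ S then B else Bᶜ := by
  ext ω
  simp only [Set.mem_ofPred_eq, Finset.ext_iff, Finset.mem_filter_univ, Set.mem_univ_pi]
  refine forall_congr' fun i => ?_
  by_cases hi : i ∈ S <;> simp [hi]

variable {Ω : Type*} [MeasurableSpace Ω] {μ : Measure Ω}

lemma integrableOn_Ioi_measureReal_lt [IsFiniteMeasure μ] {f : Ω → ℝ} (hf : Integrable f μ)
    (hf₀ : 0 ≤ᵐ[μ] f) : IntegrableOn (fun t => μ.real {y | t < f y}) (Set.Ioi 0) := by
  have hanti : Antitone fun t => μ {y | t < f y} := fun s t hst =>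
    measure_mono fun y hy => lt_of_le_of_lt hst hy
  refine integrable_toReal_of_lintegral_ne_top hanti.measurable.aemeasurable ?_
  rw [← lintegral_eq_lintegral_meas_lt μ hf₀ hf.aemeasurable]
  exact hf.lintegral_lt_top.ne

variable [IsProbabilityMeasure μ]

section Counting

variable {ι : Type*} [Fintype ι] {B : Set Ω} [DecidablePred (· ∈ B)]

lemma measurableSet_setOf_filter_mem_eq (hB : MeasurableSet B) (S : Finset ι) :
    MeasurableSet {ω : ι → Ω | ({i | ω i ∈ B} : Finset ι) = S} := by
  classical
  rw [setOf_filter_mem_eq_pi]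
  exact MeasurableSet.univ_pi fun i => by split_ifs <;> simp [hB]

lemma measureReal_pi_filter_mem_eq (hB : MeasurableSet B) (S : Finset ι) :
    (Measure.pi fun _ : ι => μ).real {ω | ({i | ω i ∈ B} : Finset ι) = S} =
      μ.real B ^ S.card * (1 - μ.real B) ^ (Fintype.card ι - S.card) := by
  classical
  simp only [setOf_filter_mem_eq_pi, measureReal_def, Measure.pi_pi, ENNReal.toReal_prod]
  simp only [← measureReal_def, apply_ite μ.real, probReal_compl_eq_one_sub hB, Finset.prod_ite,
    Finset.prod_const]
  simp [Finset.filter_not, Finset.card_sdiff]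

lemma measurable_card_filter_mem (hB : MeasurableSet B) :
    Measurable fun ω : ι → Ω => ({i | ω i ∈ B} : Finset ι).card := by
  simp only [Finset.card_filter]
  exact Finset.measurable_sum _ fun i _ =>
    Measurable.ite (measurable_pi_apply i hB) measurable_const measurable_const

lemma measureReal_pi_card_filter_mem_eq (hB : MeasurableSet B) (j : ℕ) :
    (Measure.pi fun _ : ι => μ).real {ω | ({i | ω i ∈ B} : Finset ι).card = j} =
      (Fintype.card ι).choose j * (μ.real B ^ j * (1 - μ.real B) ^ (Fintype.card ι - j)) := by
  classical
  have hset : {ω : ι → Ω | ({i | ω i ∈ B} : Finset ι).card = j} =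
      (fun ω : ι → Ω => ({i | ω i ∈ B} : Finset ι)) ⁻¹'
        ((Finset.univ : Finset ι).powersetCard j : Finset (Finset ι)) := by
    ext ω
    simp
  have hfiber : ∀ S ∈ (Finset.univ : Finset ι).powersetCard j,
      (Measure.pi fun _ : ι => μ).real ((fun ω => ({i | ω i ∈ B} : Finset ι)) ⁻¹' {S}) =
        μ.real B ^ j * (1 - μ.real B) ^ (Fintype.card ι - j) := fun S hS => by
    rw [← (Finset.mem_powersetCard.1 hS).2]
    exact measureReal_pi_filter_mem_eq hB S
  rw [hset, ← sum_measureReal_preimage_singleton _ fun S _ =>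
    measurableSet_setOf_filter_mem_eq hB S, Finset.sum_congr rfl hfiber, Finset.sum_const,
    Finset.card_powersetCard, Finset.card_univ, nsmul_eq_mul]

lemma measureReal_pi_card_filter_mem_lt (hB : MeasurableSet B) (k : ℕ) :
    (Measure.pi fun _ : ι => μ).real {ω | ({i | ω i ∈ B} : Finset ι).card < k} =
      binomialLowerTail (Fintype.card ι) k (μ.real B) := by
  have hset : {ω : ι → Ω | ({i | ω i ∈ B} : Finset ι).card < k} =
      (fun ω : ι → Ω => ({i | ω i ∈ B} : Finset ι).card) ⁻¹' (Finset.range k) := by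
    ext ω
    simp
  rw [hset, ← sum_measureReal_preimage_singleton _ fun j _ =>
    measurable_card_filter_mem hB (measurableSet_singleton j)]
  exact Finset.sum_congr rfl fun j _ => measureReal_pi_card_filter_mem_eq hB j

end Counting

section Expectation

variable {N k : ℕ} {f : Ω → ℝ} {l z α L : ℝ}

lemma measureReal_pi_lt_kthVal_comp (hf : Measurable f) (hk : 1 ≤ k) (hkN : k ≤ N) (t : ℝ) :
    (Measure.pi fun _ : Fin N => μ).real {ω | t < kthVal k fun i => f (ω i)} =
      binomialLowerTail N k (μ.real {y | f y ≤ t}) := by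
  classical
  have hlt : {ω : Fin N → Ω | t < kthVal k fun i => f (ω i)} =
      {ω | ({i | ω i ∈ {y | f y ≤ t}} : Finset (Fin N)).card < k} := by
    ext ω
    exact not_le.symm.trans ((kthVal_le_iff hk hkN).not.trans not_le)
  rw [hlt, measureReal_pi_card_filter_mem_lt (measurableSet_le hf measurable_const),
    Fintype.card_fin]

lemma integrable_kthVal_comp (hf : Measurable f) (hfi : Integrable f μ) (hf₀ : 0 ≤ f) (hk : 1 ≤ k)
    (hkN : k ≤ N) :
    Integrable (fun ω => kthVal k fun i => f (ω i)) (Measure.pi fun _ : Fin N => μ) := by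
  refine Integrable.mono'
    (integrable_finsetSum Finset.univ fun i _ => integrable_comp_eval (i := i) hfi)
    ((measurable_kthVal hk hkN).comp (by fun_prop)).aestronglyMeasurable (ae_of_all _ fun ω => ?_)
  have hω : 0 ≤ fun i => f (ω i) := fun i => hf₀ (ω i)
  rw [Real.norm_of_nonneg (kthVal_nonneg hk hkN hω)]
  exact kthVal_le_sum hk hkN hω

lemma integrableOn_binomialLowerTail_measureReal_le (hf : Measurable f) (hfi : Integrable f μ)
    (hf₀ : 0 ≤ f) (hk : 1 ≤ k) (hkN : k ≤ N) :
    IntegrableOn (fun t => binomialLowerTail N k (μ.real {y | f y ≤ t})) (Set.Ioi 0) := by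
  simp only [← measureReal_pi_lt_kthVal_comp hf hk hkN]
  exact integrableOn_Ioi_measureReal_lt (integrable_kthVal_comp hf hfi hf₀ hk hkN)
    (ae_of_all _ fun ω => kthVal_nonneg hk hkN fun i => hf₀ (ω i))

lemma integral_kthVal_comp (hf : Measurable f) (hfi : Integrable f μ) (hf₀ : 0 ≤ f) (hk : 1 ≤ k)
    (hkN : k ≤ N) :
    ∫ ω, kthVal k (fun i => f (ω i)) ∂(Measure.pi fun _ : Fin N => μ) =
      ∫ t in Set.Ioi 0, binomialLowerTail N k (μ.real {y | f y ≤ t}) := by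
  rw [(integrable_kthVal_comp hf hfi hf₀ hk hkN).integral_eq_integral_meas_lt
    (ae_of_all _ fun ω => kthVal_nonneg hk hkN fun i => hf₀ (ω i))]
  simp only [measureReal_pi_lt_kthVal_comp hf hk hkN]

lemma setIntegral_Ioi_binomialLowerTail_mem_Icc (hf : Measurable f) (hfi : Integrable f μ)
    (hf₀ : 0 ≤ f) (hk : 1 ≤ k) (hkN : k ≤ N + 1) (hl : 0 ≤ l) (hz₀ : 0 < z) (hz₁ : z ≤ 1) :
    ∫ t in Set.Ioi l, binomialLowerTail (N + 1) k (μ.real {y | f y ≤ t}) ∈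
      Set.Icc 0 (k / z ^ k * (1 - μ.real {y | f y ≤ l} * (1 - z)) ^ N *
        ∫ t in Set.Ioi l, μ.real {y | t < f y}) := by
  have hsubset : Set.Ioi l ⊆ Set.Ioi 0 := Set.Ioi_subset_Ioi hl
  refine ⟨integral_nonneg fun t => binomialLowerTail_nonneg measureReal_nonneg measureReal_le_one,
    ?_⟩
  rw [← integral_const_mul]
  refine setIntegral_mono_on
    ((integrableOn_binomialLowerTail_measureReal_le hf hfi hf₀ hk hkN).mono_set hsubset)
    (((integrableOn_Ioi_measureReal_lt hfi (ae_of_all _ hf₀)).mono_set hsubset).const_mul _)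
    measurableSet_Ioi fun t ht => ?_
  have hcompl : μ.real {y | t < f y} = 1 - μ.real {y | f y ≤ t} := by
    rw [← probReal_compl_eq_one_sub (measurableSet_le hf measurable_const)]
    simp [Set.compl_def]
  have hmono : μ.real {y | f y ≤ l} ≤ μ.real {y | f y ≤ t} :=
    measureReal_mono fun y (hy : f y ≤ l) => hy.trans (le_of_lt ht)
  rw [hcompl]
  exact binomialLowerTail_succ_le_mul_one_sub hkN hmono measureReal_nonneg measureReal_le_one
    hz₀ hz₁

lemma integral_binomialLowerTail_div_rpow_mem_Icc (hα : 0 ≤ α) (hL : 0 < L) (hl : 0 ≤ l)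
    (hlL : l ≤ L) (hkN : k ≤ N + 1) (hz₀ : 0 < z) (hz₁ : z ≤ 1) :
    ∫ t in l..L, binomialLowerTail (N + 1) k ((t / L) ^ α) ∈
      Set.Icc 0 (k / z ^ k * (1 - (l / L) ^ α * (1 - z)) ^ N * (L - l)) := by
  have : Continuous fun t : ℝ => (t / L) ^ α :=
    (Real.continuous_rpow_const hα).comp (by fun_prop)
  have hcdf₀ : ∀ t, 0 ≤ t → 0 ≤ (t / L) ^ α := fun t ht => by positivity
  have hcdf₁ : ∀ t ∈ Set.Icc l L, (t / L) ^ α ≤ 1 := fun t ht =>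
    Real.rpow_le_one (div_nonneg (hl.trans ht.1) hL.le) ((div_le_one hL).2 ht.2) hα
  have hwz : 0 ≤ 1 - (l / L) ^ α * (1 - z) := by
    nlinarith [hcdf₀ l hl, hcdf₁ l ⟨le_rfl, hlL⟩]
  constructor
  · exact intervalIntegral.integral_nonneg hlL fun t ht =>
      binomialLowerTail_nonneg (hcdf₀ t (hl.trans ht.1)) (hcdf₁ t ht)
  · calc ∫ t in l..L, binomialLowerTail (N + 1) k ((t / L) ^ α)
        ≤ ∫ _ in l..L, k / z ^ k * (1 - (l / L) ^ α * (1 - z)) ^ N := by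
          refine intervalIntegral.integral_mono_on hlL
            (Continuous.intervalIntegrable (by fun_prop) _ _) (by simp) fun t ht => ?_
          have hcdf := hcdf₀ t (hl.trans ht.1)
          refine (binomialLowerTail_succ_le_mul_one_sub hkN ?_ hcdf (hcdf₁ t ht) hz₀ hz₁).trans
            (mul_le_of_le_one_right (by positivity) (by linarith))
          have := ht.1
          gcongr
      _ = k / z ^ k * (1 - (l / L) ^ α * (1 - z)) ^ N * (L - l) := by
          rw [intervalIntegral.integral_const, smul_eq_mul, mul_comm]

lemma le_of_measureReal_eq_div_rpow {s : Set Ω} (hα : 0 < α) (hL : 0 < L)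
    (hs : μ.real s = (l / L) ^ α) : l ≤ L := by
  by_contra! hlt
  exact (Real.one_lt_rpow ((one_lt_div hL).2 hlt) hα).not_ge (hs ▸ measureReal_le_one)

lemma abs_integral_kthVal_comp_sub_le (hf : Measurable f) (hfi : Integrable f μ) (hf₀ : 0 ≤ f)
    (hα : 0 < α) (hL : 0 < L) (hl : 0 ≤ l)
    (hcdf : ∀ t, 0 ≤ t → t ≤ l → μ.real {y | f y ≤ t} = (t / L) ^ α) (hk : 1 ≤ k)
    (hkN : k ≤ N + 1) (hz₀ : 0 < z) (hz₁ : z ≤ 1) :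
    |(∫ ω, kthVal k (fun i => f (ω i)) ∂(Measure.pi fun _ : Fin (N + 1) => μ)) -
        L * (Real.Gamma (k + 1 / α) / Real.Gamma k) *
          (Real.Gamma ((N + 1 : ℕ) + 1) / Real.Gamma ((N + 1 : ℕ) + 1 + 1 / α))| ≤
      k / z ^ k * (1 - (l / L) ^ α * (1 - z)) ^ N *
        ((∫ t in Set.Ioi l, μ.real {y | t < f y}) + (L - l)) := by
  have hl_cdf : μ.real {y | f y ≤ l} = (l / L) ^ α := hcdf l hl le_rfl
  have hlL : l ≤ L := le_of_measureReal_eq_div_rpow hα hL hl_cdf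
  have hcont : Continuous fun t : ℝ => binomialLowerTail (N + 1) k ((t / L) ^ α) :=
    continuous_binomialLowerTail.comp ((Real.continuous_rpow_const hα.le).comp (by fun_prop))
  have hint := integrableOn_binomialLowerTail_measureReal_le hf hfi hf₀ hk hkN
  have hcommon : ∫ t in (0 : ℝ)..l, binomialLowerTail (N + 1) k (μ.real {y | f y ≤ t}) =
      ∫ t in (0 : ℝ)..l, binomialLowerTail (N + 1) k ((t / L) ^ α) := by
    refine intervalIntegral.integral_congr fun t ht => ?_
    rw [Set.uIcc_of_le hl] at ht
    exact congrArg _ (hcdf t ht.1 ht.2)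
  have htail := setIntegral_Ioi_binomialLowerTail_mem_Icc hf hfi hf₀ hk hkN hl hz₀ hz₁
  have hmodel := integral_binomialLowerTail_div_rpow_mem_Icc hα.le hL hl hlL hkN hz₀ hz₁
  rw [hl_cdf] at htail
  rw [integral_kthVal_comp hf hfi hf₀ hk hkN,
    ← integral_binomialLowerTail_div_rpow hα hL.ne' hk hkN,
    ← intervalIntegral.integral_interval_add_Ioi hint (hint.mono_set (Set.Ioi_subset_Ioi hl)),
    ← intervalIntegral.integral_add_adjacent_intervals (hcont.intervalIntegrable 0 l)
      (hcont.intervalIntegrable l L), hcommon, add_sub_add_left_eq_sub, mul_add]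
  exact abs_le.2 (by constructor <;> linarith [htail.1, htail.2, hmodel.1, hmodel.2])

end Expectation

end Sampling

section NearestDistance

lemma integrable_dist_of_isBounded_univ {M : Type*} [PseudoMetricSpace M] [MeasurableSpace M]
    [OpensMeasurableSpace M] {μ : Measure M} [IsFiniteMeasure μ]
    (hM : Bornology.IsBounded (Set.univ : Set M)) (x : M) : Integrable (dist x) μ :=
  Integrable.of_bound (by fun_prop) (diam (Set.univ : Set M)) <| ae_of_all _ fun y => by
    simpa using dist_le_diam_of_mem hM (Set.mem_univ x) (Set.mem_univ y)

lemma euclidean_ball_volume_eq_div_rpow {n : ℕ} (hn : n ≠ 0) (l : ℝ) :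
    Real.pi ^ ((n : ℝ) / 2) * l ^ n / Real.Gamma ((n : ℝ) / 2 + 1) =
      (l / (Real.Gamma ((n : ℝ) / 2 + 1) ^ (1 / (n : ℝ)) / √Real.pi)) ^ (n : ℝ) := by
  have hΓ : 0 ≤ Real.Gamma ((n : ℝ) / 2 + 1) := Real.Gamma_nonneg_of_nonneg (by positivity)
  rw [Real.rpow_natCast, div_pow, div_pow, one_div, Real.rpow_inv_natCast_pow hΓ hn,
    Real.rpow_div_two_eq_sqrt _ Real.pi_nonneg, Real.rpow_natCast, div_div_eq_mul_div, mul_comm]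

theorem kth_nearest_distance_flat_d_dim_general {M : Type*} [PseudoMetricSpace M]
    [MeasurableSpace M] [OpensMeasurableSpace M] (μ : Measure M) [IsProbabilityMeasure μ] (x : M)
    (hdist : Integrable (dist x) μ) {k : ℕ} (hk : 1 ≤ k) {α L l₀ ρ : ℝ} (hα : 0 < α) (hL : 0 < L)
    (hl₀ : 0 ≤ l₀) (hA : ∀ l, 0 ≤ l → l ≤ l₀ → μ.real (closedBall x l) = (l / L) ^ α)
    (hρ : 1 - (l₀ / L) ^ α < ρ) :
    ∃ C > 0, ∀ N : ℕ, k ≤ N →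
      |(∫ ω : Fin N → M, kthVal k (fun i => dist x (ω i)) ∂(Measure.pi fun _ : Fin N => μ)) -
          L * (Real.Gamma (k + 1 / α) / Real.Gamma k) *
            (Real.Gamma (N + 1) / Real.Gamma (N + 1 + 1 / α))| ≤ C * ρ ^ N := by
  set w := (l₀ / L) ^ α
  have hball : ∀ l, {y | dist x y ≤ l} = closedBall x l := fun l => by ext y; simp [dist_comm]
  have hw₁ : w ≤ 1 := (hA l₀ hl₀ le_rfl).symm.trans_le measureReal_le_one
  have hlL : l₀ ≤ L := le_of_measureReal_eq_div_rpow hα hL (hA l₀ hl₀ le_rfl)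
  have hρ₀ : 0 < ρ := by linarith
  obtain ⟨z, hz₀, hz₁, hzρ⟩ : ∃ z, 0 < z ∧ z ≤ 1 ∧ z ≤ ρ - (1 - w) :=
    ⟨min 1 (ρ - (1 - w)), lt_min one_pos (by linarith), min_le_left _ _, min_le_right _ _⟩
  have hrate₀ : 0 ≤ 1 - w * (1 - z) := by nlinarith
  have hrate : 1 - w * (1 - z) ≤ ρ := by nlinarith
  set T := (∫ t in Set.Ioi l₀, μ.real {y | t < dist x y}) + (L - l₀)
  have : 0 ≤ T := add_nonneg (integral_nonneg fun t => measureReal_nonneg) (sub_nonneg.2 hlL)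
  refine ⟨k / z ^ k * T / ρ + 1, by positivity, fun N hkN => ?_⟩
  obtain ⟨m, rfl⟩ := Nat.exists_eq_add_of_le' (hk.trans hkN)
  calc _ ≤ k / z ^ k * (1 - w * (1 - z)) ^ m * T :=
        abs_integral_kthVal_comp_sub_le (by fun_prop) hdist (fun y => dist_nonneg) hα hL hl₀
          (by simpa only [hball] using hA) hk hkN hz₀ hz₁
    _ ≤ k / z ^ k * ρ ^ m * T := by gcongr
    _ = k / z ^ k * T / ρ * ρ ^ (m + 1) := by rw [pow_succ]; field_simp
    _ ≤ (k / z ^ k * T / ρ + 1) * ρ ^ (m + 1) := by gcongr; linarith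

end NearestDistance

/-- Let `M` be a separable metric space of finite diameter carrying a Borel
probability measure `μ`, fix `x ∈ M`, `k ≥ 1` and an integer dimension `n ≥ 1`.  Suppose there
is `l₀ > 0` with `w₀ := π^(n/2) l₀^n / Γ(n/2+1) ≤ 1` such that
`A(l) = μ(closedBall x l) = π^(n/2) l^n / Γ(n/2+1)` (the volume of a Euclidean `n`-ball of
radius `l`) for all `0 ≤ l ≤ l₀`.  Then for each `ρ ∈ (1 − w₀, 1)` there is `C > 0` such that
for all `N ≥ k`, the expected `k`-th nearest-neighbor distance (for `N` i.i.d. sites, product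
measure on `Fin N → M`) satisfies
`|E[D_k(N)] − (Γ(n/2+1)^(1/n)/√π) (Γ(k+1/n)/Γ(k)) (Γ(N+1)/Γ(N+1+1/n))| ≤ C ρ^N`. -/
theorem kth_nearest_distance_flat_d_dim
    {M : Type*} [MetricSpace M] [TopologicalSpace.SeparableSpace M]
    [MeasurableSpace M] [BorelSpace M]
    (μ : Measure M) [IsProbabilityMeasure μ]
    (hdiam : EMetric.diam (Set.univ : Set M) < ⊤)
    (x : M) (k : ℕ) (hk : 1 ≤ k) (n : ℕ) (hn : 1 ≤ n)
    (l₀ : ℝ) (hl₀ : 0 < l₀)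
    (hw₀ : Real.pi ^ ((n : ℝ) / 2) * l₀ ^ n / Real.Gamma ((n : ℝ) / 2 + 1) ≤ 1)
    (hA : ∀ l : ℝ, 0 ≤ l → l ≤ l₀ →
      (μ (closedBall x l)).toReal =
        Real.pi ^ ((n : ℝ) / 2) * l ^ n / Real.Gamma ((n : ℝ) / 2 + 1))
    (ρ : ℝ)
    (hρ₁ : 1 - Real.pi ^ ((n : ℝ) / 2) * l₀ ^ n / Real.Gamma ((n : ℝ) / 2 + 1) < ρ)
    (hρ₂ : ρ < 1) :
    ∃ C > 0, ∀ N : ℕ, k ≤ N →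
      |(∫ ω : Fin N → M, kthVal k (fun i => dist x (ω i))
            ∂(Measure.pi fun _ : Fin N => μ)) -
          (Real.Gamma ((n : ℝ) / 2 + 1)) ^ (1 / (n : ℝ)) / Real.sqrt Real.pi *
            (Real.Gamma (k + 1 / (n : ℝ)) / Real.Gamma k) *
            (Real.Gamma (N + 1) / Real.Gamma (N + 1 + 1 / (n : ℝ)))| ≤ C * ρ ^ N := by
  have : 0 < Real.Gamma ((n : ℝ) / 2 + 1) := Real.Gamma_pos_of_pos (by positivity)
  simp only [euclidean_ball_volume_eq_div_rpow (Nat.one_le_iff_ne_zero.1 hn)] at hA hρ₁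
  exact kth_nearest_distance_flat_d_dim_general μ x
    (integrable_dist_of_isBounded_univ (isBounded_iff_ediam_ne_top.2 hdiam.ne) x) hk
    (by positivity) (by positivity) hl₀.le hA hρ₁
end

section
/- There exists a constant C > 0 such that for every integer N ≥ 1: |√N · Γ(N + 1)/Γ(N + 3/2) − 1 + 3/(8N)| ≤ C/N². In other words, √N · Γ(N + 1)/Γ(N + 3/2) = 1 − 3/(8N) + O(1/N²) as N → ∞. -/
/-!
Put `R x = Γ(x + 1) / Γ(x + 1/2)`. Log-convexity of `Γ` gives `x ≤ R x ^ 2 ≤ x + 1/2`, so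
`R ^ 2 ~ x`. The functional equation makes `R x ^ 2 / (x + 1/4)` decrease and
`R x ^ 2 / (x + 1/4 + 1/(32 x))` increase along `x, x + 1, x + 2, …`; as both quotients tend to `1`,
this sharpens the bounds to `x + 1/4 ≤ R x ^ 2 ≤ x + 1/4 + 1/(32 x)`. Hence `x * R x ^ 2` is within
`1/64` of `(x + 1/8) ^ 2`, and the theorem follows from
`√x * Γ(x + 1) / Γ(x + 3/2) = √(x * R x ^ 2) / (x + 1/2)`.
-/

open Filter Asymptotics

lemma abs_sqrt_sub_le_div {a s : ℝ} (ha : 0 ≤ a) (hs : 0 < s) : |√a - s| ≤ |a - s ^ 2| / s := by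
  have hfactor : a - s ^ 2 = (√a - s) * (√a + s) := by
    linear_combination -Real.sq_sqrt ha
  rw [le_div_iff₀ hs, hfactor, abs_mul, abs_of_pos (by positivity : 0 < √a + s)]
  gcongr
  exact le_add_of_nonneg_left (Real.sqrt_nonneg a)

lemma isEquivalent_id_of_abs_sub_le {f : ℝ → ℝ} {c : ℝ} (h : ∀ᶠ x in atTop, |f x - x| ≤ c) :
    f ~[atTop] id := by
  have hbounded : (f - id) =O[atTop] (fun _ => (1 : ℝ)) :=
    IsBigO.of_bound c <| h.mono fun x hx => by simpa using hx
  exact hbounded.trans_isLittleO (isLittleO_const_id_atTop 1)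

lemma le_of_isEquivalent_of_mul_le {f g : ℝ → ℝ} {a : ℝ} (hg : ∀ x > a, 0 < g x)
    (hequiv : f ~[atTop] g) (hstep : ∀ x > a, f (x + 1) * g x ≤ f x * g (x + 1))
    {x : ℝ} (hx : a < x) : g x ≤ f x := by
  have hmem (n : ℕ) : a < x + n := by linarith [n.cast_nonneg (α := ℝ)]
  have hanti : Antitone fun n : ℕ => f (x + n) / g (x + n) :=
    antitone_nat_of_succ_le fun n => by
      rw [div_le_div_iff₀ (hg _ (hmem _)) (hg _ (hmem _)), Nat.cast_succ, ← add_assoc]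
      exact hstep _ (hmem n)
  have hlim : Tendsto (fun n : ℕ => f (x + n) / g (x + n)) atTop (nhds 1) := by
    have hquot := (isEquivalent_iff_tendsto_one
      ((eventually_gt_atTop a).mono fun y hy => (hg y hy).ne')).mp hequiv
    exact hquot.comp (tendsto_atTop_add_const_left _ x tendsto_natCast_atTop_atTop)
  have hone : 1 ≤ f x / g x := by simpa using hanti.le_of_tendsto hlim 0
  rwa [one_le_div (hg x hx)] at hone

lemma sq_Gamma_midpoint_le {x y : ℝ} (hx : 0 < x) (hy : 0 < y) :
    Real.Gamma ((x + y) / 2) ^ 2 ≤ Real.Gamma x * Real.Gamma y := by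
  have hconvex := Real.Gamma_mul_add_mul_le_rpow_Gamma_mul_rpow_Gamma hx hy
    one_half_pos one_half_pos (add_halves 1)
  have hmid : 1 / 2 * x + 1 / 2 * y = (x + y) / 2 := by ring
  rw [hmid, ← Real.sqrt_eq_rpow, ← Real.sqrt_eq_rpow,
    ← Real.sqrt_mul (Real.Gamma_pos_of_pos hx).le] at hconvex
  exact (Real.le_sqrt' (Real.Gamma_pos_of_pos (by positivity))).mp hconvex

/-- The ratio `Γ(x + 1) / Γ(x + 1/2)`, a continuous version of the Wallis ratio. Its square has
a rational functional equation, so it can be compared with rational functions of `x`. -/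
noncomputable def gammaRatio (x : ℝ) : ℝ := Real.Gamma (x + 1) / Real.Gamma (x + 1 / 2)

section GammaRatio

variable {x : ℝ}

lemma gammaRatio_pos (hx : 0 < x) : 0 < gammaRatio x :=
  div_pos (Real.Gamma_pos_of_pos (by positivity)) (Real.Gamma_pos_of_pos (by positivity))

lemma Gamma_add_three_halves (hx : 0 < x) :
    Real.Gamma (x + 3 / 2) = (x + 1 / 2) * Real.Gamma (x + 1 / 2) := by
  rw [← Real.Gamma_add_one (by positivity)]
  ring_nf

lemma gammaRatio_add_one (hx : 0 < x) :
    gammaRatio (x + 1) = (x + 1) / (x + 1 / 2) * gammaRatio x := by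
  have hshift : x + 1 + 1 / 2 = x + 3 / 2 := by ring
  rw [gammaRatio, gammaRatio, hshift, Gamma_add_three_halves hx,
    Real.Gamma_add_one (by positivity), mul_div_mul_comm]

lemma le_gammaRatio_sq (hx : 0 < x) : x ≤ gammaRatio x ^ 2 := by
  have hmid := sq_Gamma_midpoint_le hx (by positivity : 0 < x + 1)
  have hhalf : (x + (x + 1)) / 2 = x + 1 / 2 := by ring
  have hpos : 0 < Real.Gamma (x + 1 / 2) := Real.Gamma_pos_of_pos (by positivity)
  rw [hhalf] at hmid
  rw [gammaRatio, div_pow, le_div_iff₀ (by positivity)]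
  calc x * Real.Gamma (x + 1 / 2) ^ 2
      ≤ x * (Real.Gamma x * Real.Gamma (x + 1)) := by gcongr
    _ = Real.Gamma (x + 1) ^ 2 := by rw [Real.Gamma_add_one hx.ne']; ring

lemma gammaRatio_sq_le (hx : 0 < x) : gammaRatio x ^ 2 ≤ x + 1 / 2 := by
  have hmid := sq_Gamma_midpoint_le (by positivity : 0 < x + 1 / 2) (by positivity : 0 < x + 3 / 2)
  have hhalf : (x + 1 / 2 + (x + 3 / 2)) / 2 = x + 1 := by ring
  have hpos : 0 < Real.Gamma (x + 1 / 2) := Real.Gamma_pos_of_pos (by positivity)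
  rw [hhalf, Gamma_add_three_halves hx] at hmid
  rw [gammaRatio, div_pow, div_le_iff₀ (by positivity)]
  linarith

lemma gammaRatio_sq_isEquivalent_id : (fun x => gammaRatio x ^ 2) ~[atTop] id := by
  refine isEquivalent_id_of_abs_sub_le (c := 1 / 2) ?_
  filter_upwards [eventually_gt_atTop 0] with x hx
  rw [abs_le]
  constructor <;> linarith [le_gammaRatio_sq hx, gammaRatio_sq_le hx]

lemma add_quarter_le_gammaRatio_sq (hx : 0 < x) : x + 1 / 4 ≤ gammaRatio x ^ 2 := by
  have hid : (fun y : ℝ => y + 1 / 4) ~[atTop] id :=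
    isEquivalent_id_of_abs_sub_le (c := 1 / 4) (.of_forall fun y => by norm_num)
  refine le_of_isEquivalent_of_mul_le (f := fun y => gammaRatio y ^ 2) (a := 0)
    (fun y hy => by positivity) (gammaRatio_sq_isEquivalent_id.trans hid.symm) (fun y hy => ?_) hx
  have hrational : ((y + 1) / (y + 1 / 2)) ^ 2 * (y + 1 / 4) ≤ y + 1 + 1 / 4 := by
    rw [div_pow, div_mul_eq_mul_div, div_le_iff₀ (by positivity)]
    linarith
  calc gammaRatio (y + 1) ^ 2 * (y + 1 / 4)
      = gammaRatio y ^ 2 * (((y + 1) / (y + 1 / 2)) ^ 2 * (y + 1 / 4)) := by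
        rw [gammaRatio_add_one hy]; ring
    _ ≤ gammaRatio y ^ 2 * (y + 1 + 1 / 4) := by gcongr

lemma gammaRatio_sq_le_add_quarter_add (hx : 0 < x) :
    gammaRatio x ^ 2 ≤ x + 1 / 4 + 1 / (32 * x) := by
  have hid : (fun y : ℝ => y + 1 / 4 + 1 / (32 * y)) ~[atTop] id := by
    refine isEquivalent_id_of_abs_sub_le (c := 1 / 4 + 1 / 32) ?_
    filter_upwards [eventually_ge_atTop 1] with y hy
    have hinv : 1 / (32 * y) ≤ 1 / 32 := one_div_le_one_div_of_le (by norm_num) (by linarith)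
    rw [add_assoc, add_sub_cancel_left, abs_of_pos (by positivity)]
    gcongr
  refine le_of_isEquivalent_of_mul_le (g := fun y => gammaRatio y ^ 2) (a := 0)
    (fun y hy => pow_pos (gammaRatio_pos hy) 2)
    (hid.trans gammaRatio_sq_isEquivalent_id.symm) (fun y hy => ?_) hx
  have hrational : y + 1 + 1 / 4 + 1 / (32 * (y + 1)) ≤
      (y + 1 / 4 + 1 / (32 * y)) * ((y + 1) / (y + 1 / 2)) ^ 2 := by
    have hdiff : (y + 1 / 4 + 1 / (32 * y)) * (y + 1) ^ 2 -
        (y + 1 + 1 / 4 + 1 / (32 * (y + 1))) * (y + 1 / 2) ^ 2 =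
          (3 * y + 4) / (128 * y * (y + 1)) := by
      field_simp
      ring
    rw [div_pow, mul_div_assoc', le_div_iff₀ (by positivity), ← sub_nonneg, hdiff]
    positivity
  calc (y + 1 + 1 / 4 + 1 / (32 * (y + 1))) * gammaRatio y ^ 2
      ≤ (y + 1 / 4 + 1 / (32 * y)) * ((y + 1) / (y + 1 / 2)) ^ 2 * gammaRatio y ^ 2 := by gcongr
    _ = (y + 1 / 4 + 1 / (32 * y)) * gammaRatio (y + 1) ^ 2 := by
        rw [gammaRatio_add_one hy]; ring

lemma abs_mul_gammaRatio_sq_sub_le (hx : 0 < x) :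
    |x * gammaRatio x ^ 2 - (x + 1 / 8) ^ 2| ≤ 1 / 64 := by
  have hlower : x * (x + 1 / 4) ≤ x * gammaRatio x ^ 2 := by
    gcongr
    exact add_quarter_le_gammaRatio_sq hx
  have hupper : x * gammaRatio x ^ 2 ≤ x * (x + 1 / 4) + 1 / 32 :=
    calc x * gammaRatio x ^ 2
        ≤ x * (x + 1 / 4 + 1 / (32 * x)) := by
          gcongr
          exact gammaRatio_sq_le_add_quarter_add hx
      _ = x * (x + 1 / 4) + 1 / 32 := by field_simp
  rw [abs_le]
  constructor <;> linarith

lemma abs_sqrt_mul_gammaRatio_sub_le (hx : 0 < x) :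
    |√x * gammaRatio x - (x + 1 / 8)| ≤ 1 / (64 * x) := by
  have hsqrt : √(x * gammaRatio x ^ 2) = √x * gammaRatio x := by
    rw [Real.sqrt_mul hx.le, Real.sqrt_sq (gammaRatio_pos hx).le]
  calc |√x * gammaRatio x - (x + 1 / 8)|
      ≤ |x * gammaRatio x ^ 2 - (x + 1 / 8) ^ 2| / (x + 1 / 8) := by
        rw [← hsqrt]
        exact abs_sqrt_sub_le_div (by positivity) (by positivity)
    _ ≤ 1 / 64 / x := by
        gcongr
        · exact abs_mul_gammaRatio_sq_sub_le hx
        · linarith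
    _ = 1 / (64 * x) := div_div ..

lemma sqrt_mul_Gamma_div_Gamma_eq (hx : 0 < x) :
    √x * Real.Gamma (x + 1) / Real.Gamma (x + 3 / 2) = √x * gammaRatio x / (x + 1 / 2) := by
  rw [Gamma_add_three_halves hx, gammaRatio, mul_div_assoc', div_div, mul_comm (x + 1 / 2)]

end GammaRatio

theorem gamma_ratio_asymptotics_general {x : ℝ} (hx : 0 < x) :
    |√x * Real.Gamma (x + 1) / Real.Gamma (x + 3 / 2) - 1 + 3 / (8 * x)| ≤ 13 / 64 / x ^ 2 := by
  have hsplit : √x * gammaRatio x / (x + 1 / 2) - 1 + 3 / (8 * x) =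
      (√x * gammaRatio x - (x + 1 / 8)) / (x + 1 / 2) + 3 / (16 * x) / (x + 1 / 2) := by
    field_simp
    ring
  rw [sqrt_mul_Gamma_div_Gamma_eq hx, hsplit, ← add_div, abs_div,
    abs_of_pos (by positivity : 0 < x + 1 / 2)]
  calc |√x * gammaRatio x - (x + 1 / 8) + 3 / (16 * x)| / (x + 1 / 2)
      ≤ (|√x * gammaRatio x - (x + 1 / 8)| + |3 / (16 * x)|) / (x + 1 / 2) := by
        gcongr
        exact abs_add_le _ _
    _ ≤ (1 / (64 * x) + 3 / (16 * x)) / x := by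
        rw [abs_of_pos (by positivity : 0 < 3 / (16 * x))]
        gcongr
        · exact abs_sqrt_mul_gammaRatio_sub_le hx
        · linarith
    _ = 13 / 64 / x ^ 2 := by
        field_simp
        norm_num

/-- There is a constant `C > 0` such that for every integer `N ≥ 1`,
`|√N · Γ(N+1)/Γ(N+3/2) − 1 + 3/(8N)| ≤ C/N²`; in other words,
`√N · Γ(N+1)/Γ(N+3/2) = 1 − 3/(8N) + O(1/N²)` as `N → ∞`. -/
theorem gamma_ratio_asymptotics :
    ∃ C > 0, ∀ N : ℕ, 1 ≤ N →
      |Real.sqrt N * Real.Gamma (N + 1) / Real.Gamma (N + 3/2) - 1 + 3 / (8 * N)| ≤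
        C / N ^ 2 :=
  ⟨13 / 64, by norm_num, fun _ hN => gamma_ratio_asymptotics_general (Nat.cast_pos.mpr hN)⟩
end
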